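/- Let μ0 < μ1 < … < μk be a maximal chain in the woman-dominance order on stable matchings, where μ0 is the man-optimal stable matching, μk is the woman-optimal stable matching, and μ_{i+1} covers μ_i for each i. Then there is a unique sequence of rotations ρ_0, ρ_1, …, ρ_{k-1} ∈ Π such that μ_{i+1} is the elimination of ρ_i from μ_i for each i, and every rotation in Π appears exactly once in this sequence. -/

import Mathlib

/-- A matching market: men `M` and women `W`; each man has a strict preference
order over `W ∪ {∅}` and each woman over `M ∪ {∅}`, encoded by injective rank
functions (a strictly higher rank means strictly more preferred); `none`
plays the role of `∅` (being unmatched), and partners ranked below `none`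
are unacceptable. -/
structure Market (M W : Type*) where
  mRank : M → Option W → ℕ
  wRank : W → Option M → ℕ
  mRank_inj : ∀ m, Function.Injective (mRank m)
  wRank_inj : ∀ w, Function.Injective (wRank w)

/-- A matching: `mu` assigns each man a woman or `none`, `nu` assigns each
woman a man or `none`, and `μ(m) = w ↔ μ(w) = m`. -/
structure Matching (M W : Type*) where
  mu : M → Option W
  nu : W → Option M
  consistent : ∀ m w, mu m = some w ↔ nu w = some m

variable {M W : Type*}

/-- Every matched agent prefers their partner to `∅`. -/
def Market.IndivRational (mkt : Market M W) (μ : Matching M W) : Prop :=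
  (∀ m w, μ.mu m = some w → mkt.mRank m none < mkt.mRank m (some w)) ∧
  (∀ w m, μ.nu w = some m → mkt.wRank w none < mkt.wRank w (some m))

/-- `(m, w)` is a blocking pair for `μ`: they are not matched to each other,
`w ≻_m μ(m)` and `m ≻_w μ(w)`. -/
def Market.Blocking (mkt : Market M W) (μ : Matching M W) (m : M) (w : W) : Prop :=
  μ.mu m ≠ some w ∧
  mkt.mRank m (μ.mu m) < mkt.mRank m (some w) ∧
  mkt.wRank w (μ.nu w) < mkt.wRank w (some m)

/-- A matching is stable if it is individually rational and has no blocking pair. -/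
def Market.Stable (mkt : Market M W) (μ : Matching M W) : Prop :=
  mkt.IndivRational μ ∧ ∀ m w, ¬ mkt.Blocking μ m w

/-- Woman-dominance: `μ ≥ μ'` iff every woman weakly prefers her partner in `μ`. -/
def Market.Dom (mkt : Market M W) (μ μ' : Matching M W) : Prop :=
  ∀ w, mkt.wRank w (μ'.nu w) ≤ mkt.wRank w (μ.nu w)

/-- Strict woman-dominance: `μ > μ'`. -/
def Market.StrictDom (mkt : Market M W) (μ μ' : Matching M W) : Prop :=
  mkt.Dom μ μ' ∧ μ ≠ μ'

/-- `μ'` covers `μ` in the woman-dominance order on stable matchings. -/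
def Market.Covers (mkt : Market M W) (μ' μ : Matching M W) : Prop :=
  mkt.StrictDom μ' μ ∧
  ¬ ∃ μ'' : Matching M W, mkt.Stable μ'' ∧ mkt.StrictDom μ' μ'' ∧ mkt.StrictDom μ'' μ

/-- `μ'` is the elimination of the list `ρ = [(w_0,m_0),…,(w_{k-1},m_{k-1})]`
from `μ`: `k ≥ 2`, the women (resp. men) in `ρ` are distinct, `μ(w_i) = m_i`,
`μ'(m_i) = w_{(i+1) mod k}`, and every agent not appearing in `ρ` has the same
partner in `μ` and `μ'`. -/
def Matching.IsElimOf (μ' μ : Matching M W) (ρ : List (W × M)) : Prop :=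
  2 ≤ ρ.length ∧
  (ρ.map Prod.fst).Nodup ∧ (ρ.map Prod.snd).Nodup ∧
  (∀ i : Fin ρ.length, μ.nu (ρ.get i).1 = some (ρ.get i).2) ∧
  (∀ i : Fin ρ.length, μ'.mu (ρ.get i).2 =
    some (ρ.get ⟨(i.1 + 1) % ρ.length,
      Nat.mod_lt _ (Nat.lt_of_le_of_lt (Nat.zero_le _) i.isLt)⟩).1) ∧
  (∀ m : M, m ∉ ρ.map Prod.snd → μ'.mu m = μ.mu m) ∧
  (∀ w : W, w ∉ ρ.map Prod.fst → μ'.nu w = μ.nu w)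

/-- `ρ` is a rotation exposed in `μ`: the elimination of `ρ` from `μ` is a
stable matching which covers `μ`. -/
def Market.ExposedRotation (mkt : Market M W) (μ : Matching M W) (ρ : List (W × M)) : Prop :=
  ∃ μ' : Matching M W, Matching.IsElimOf μ' μ ρ ∧ mkt.Stable μ' ∧ mkt.Covers μ' μ

/-- `ρ` belongs to the set `Π` of all rotations, i.e. it is exposed in some
stable matching. -/
def Market.InPi (mkt : Market M W) (ρ : List (W × M)) : Prop :=
  ∃ μ : Matching M W, mkt.Stable μ ∧ mkt.ExposedRotation μ ρ

/-- The cyclically next index in a rotation. -/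
def RotNext (ρ : List (W × M)) (i : Fin ρ.length) : Fin ρ.length :=
  ⟨(i.1 + 1) % ρ.length, Nat.mod_lt _ (Nat.lt_of_le_of_lt (Nat.zero_le _) i.isLt)⟩

/-- The cyclically previous index in a rotation. -/
def RotPrev (ρ : List (W × M)) (i : Fin ρ.length) : Fin ρ.length :=
  ⟨(i.1 + ρ.length - 1) % ρ.length, Nat.mod_lt _ (Nat.lt_of_le_of_lt (Nat.zero_le _) i.isLt)⟩

/-- `ρ` moves man `m` from `w` to `w'` (i.e. `m = m_i`, `w = w_i`, `w' = w_{i+1}`). -/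
def MovesManFromTo (ρ : List (W × M)) (m : M) (w w' : W) : Prop :=
  ∃ i : Fin ρ.length, (ρ.get i).2 = m ∧ (ρ.get i).1 = w ∧ (ρ.get (RotNext ρ i)).1 = w'

/-- `ρ` moves woman `w` from `m` to `m'` (i.e. `w = w_i`, `m = m_i`, `m' = m_{i-1}`). -/
def MovesWomanFromTo (ρ : List (W × M)) (w : W) (m m' : M) : Prop :=
  ∃ i : Fin ρ.length, (ρ.get i).1 = w ∧ (ρ.get i).2 = m ∧ (ρ.get (RotPrev ρ i)).2 = m'

/-- `ρ1` is a type 1 predecessor of `ρ2`: `ρ1` moves some man `m` to a woman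
`w` and the pair `(w, m)` appears in `ρ2`. -/
def Market.Type1Pred (_mkt : Market M W) (ρ1 ρ2 : List (W × M)) : Prop :=
  ∃ (w : W) (m : M), (∃ w0 : W, MovesManFromTo ρ1 m w0 w) ∧ (w, m) ∈ ρ2

/-- `ρ1` is a type 2 predecessor of `ρ2`: `ρ1` moves some woman `w` from a man
strictly below `m` to a man strictly above `m`, and `ρ2` moves `m` from a woman
strictly above `w` to a woman strictly below `w`. -/
def Market.Type2Pred (mkt : Market M W) (ρ1 ρ2 : List (W × M)) : Prop :=
  ∃ (m : M) (w : W) (mlo mhi : M) (whi wlo : W),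
    MovesWomanFromTo ρ1 w mlo mhi ∧
    mkt.wRank w (some mlo) < mkt.wRank w (some m) ∧
    mkt.wRank w (some m) < mkt.wRank w (some mhi) ∧
    MovesManFromTo ρ2 m whi wlo ∧
    mkt.mRank m (some wlo) < mkt.mRank m (some w) ∧
    mkt.mRank m (some w) < mkt.mRank m (some whi)

/-- `ρ1` is a (type 1 or type 2) predecessor of `ρ2`; these are the edges of
the predecessor graph `G(Π)`. -/
def Market.Pred (mkt : Market M W) (ρ1 ρ2 : List (W × M)) : Prop :=
  mkt.Type1Pred ρ1 ρ2 ∨ mkt.Type2Pred ρ1 ρ2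

/-- `σ` assigns each woman the more preferred of her partners in `μ` and `μ'`. -/
def Market.IsJoin (mkt : Market M W) (μ μ' σ : Matching M W) : Prop :=
  ∀ w, σ.nu w = if mkt.wRank w (μ'.nu w) ≤ mkt.wRank w (μ.nu w) then μ.nu w else μ'.nu w

/-- `σ` assigns each woman the less preferred of her partners in `μ` and `μ'`. -/
def Market.IsMeet (mkt : Market M W) (μ μ' σ : Matching M W) : Prop :=
  ∀ w, σ.nu w = if mkt.wRank w (μ.nu w) ≤ mkt.wRank w (μ'.nu w) then μ.nu w else μ'.nu w

/-!
The stable matchings form a distributive lattice under woman-dominance, in which each woman gets the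
better (join) or the worse (meet) of her two partners. The elimination of a rotation only depends on
the women whose partner changes, so perspective prime intervals `[x ⊓ u, x]` and `[u, x ⊔ u]` are
eliminations of the same rotations. In a modular lattice every prime interval is connected by two
such perspectivities to one in a given maximal chain, hence every rotation occurs in the chain. It
occurs only once, since no woman ever returns to a partner she has left along the chain.

That every covering is an elimination at all is seen as follows. If `ν` strictly dominates `μ`, the
men who lose move on to their best choice among the women willing to leave their `μ`-partner. These
women are again partners of men who lose, so some of these men move along a cycle, and permuting
them yields a stable matching between `μ` and `ν`.
-/

open Function

section Lists

variable {α β : Type*}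

theorem exists_mem_periodicPts_of_mapsTo {s : Set α} {f : α → α} (hs : s.Finite)
    (hne : s.Nonempty) (hf : Set.MapsTo f s s) : ∃ x ∈ s, x ∈ periodicPts f := by
  obtain ⟨x, hx⟩ := hne
  obtain ⟨a, b, hab, heq⟩ : ∃ a b : ℕ, a < b ∧ f^[a] x = f^[b] x := by
    obtain ⟨a, -, b, -, hne, heq⟩ := Set.infinite_univ.exists_ne_map_eq_of_mapsTo
      (f := fun n : ℕ => f^[n] x) (fun n _ => hf.iterate n hx) hs
    rcases hne.lt_or_gt with hab | hba
    exacts [⟨a, b, hab, heq⟩, ⟨b, a, hba, heq.symm⟩]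
  refine ⟨f^[a] x, hf.iterate a hx, mk_mem_periodicPts (Nat.sub_pos_of_lt hab) ?_⟩
  rw [IsPeriodicPt, IsFixedPt, ← iterate_add_apply, Nat.sub_add_cancel hab.le, heq]

theorem exists_formPerm_eq_of_mapsTo [DecidableEq α] {s : Set α} {f : α → α} (hs : s.Finite)
    (hne : s.Nonempty) (hf : Set.MapsTo f s s) :
    ∃ l : List α, l ≠ [] ∧ l.Nodup ∧ (∀ x ∈ l, x ∈ s) ∧ ∀ x ∈ l, l.formPerm x = f x := by
  obtain ⟨x, hxs, hx⟩ := exists_mem_periodicPts_of_mapsTo hs hne hf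
  set l := (List.range (minimalPeriod f x)).map fun n => f^[n] x with hl
  have hnodup : l.Nodup := Cycle.nodup_coe_iff.1 nodup_periodicOrbit
  refine ⟨l, ?_, hnodup, ?_, fun y hy => ?_⟩
  · simpa [hl] using (minimalPeriod_pos_of_mem_periodicPts hx).ne'
  · intro y hy
    obtain ⟨n, -, rfl⟩ := List.mem_map.1 hy
    exact hf.iterate n hxs
  · obtain ⟨i, hi, rfl⟩ := List.getElem_of_mem hy
    rw [List.formPerm_apply_getElem _ hnodup]
    simp [hl, iterate_mod_minimalPeriod_eq, iterate_succ_apply']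

theorem formPerm_map_apply_getElem [DecidableEq α] {l : List β} {f : β → α}
    (h : (l.map f).Nodup) {i : ℕ} (hi : i < l.length) :
    (l.map f).formPerm (f l[i]) =
      f (l[(i + 1) % l.length]'(Nat.mod_lt _ (Nat.zero_lt_of_lt hi))) := by
  have := List.formPerm_apply_getElem _ h i (by simpa using hi)
  simp only [List.getElem_map, List.length_map] at this
  exact this

end Lists

section Lattices

/-- Since `c i ⋖ c (i + 1)`, taking `i` to be the last index with `¬ b ≤ a ⊔ c i` makes
`a ⊔ c i` complementary to both prime intervals. -/
theorem exists_perspective_of_covBy {L : Type*} [Lattice L] [IsUpperModularLattice L] {k : ℕ}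
    {c : Fin (k + 1) → L} (hc : ∀ i : Fin k, c i.castSucc ⋖ c i.succ) {a b : L} (hab : a ⋖ b)
    (h0 : c 0 ≤ a) (hk : b ≤ c (Fin.last k)) :
    ∃ (i : Fin k) (u : L),
      b ⊓ u = a ∧ c i.succ ⊓ u = c i.castSucc ∧ b ⊔ u = c i.succ ⊔ u := by
  obtain ⟨i, hi, hi'⟩ : ∃ i : Fin k, ¬ b ≤ a ⊔ c i.castSucc ∧ b ≤ a ⊔ c i.succ := by
    by_contra! hstep
    have hall : ∀ i, ¬ b ≤ a ⊔ c i :=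
      Fin.induction (by simpa [sup_eq_left.2 h0] using hab.lt.not_ge) hstep
    exact hall (Fin.last k) (hk.trans le_sup_right)
  set u := a ⊔ c i.castSucc
  have hau : a ≤ u := le_sup_left
  have hcu : c i.castSucc ≤ u := le_sup_right
  have hbu : b ⊓ u = a :=
    (hab.eq_or_eq (le_inf hab.le hau) inf_le_left).resolve_right (hi ∘ inf_eq_left.1)
  have hciu : c i.succ ⊓ u = c i.castSucc :=
    ((hc i).eq_or_eq (le_inf (hc i).le hcu) inf_le_left).resolve_right fun h =>
      hi (hi'.trans (sup_le hau (inf_eq_left.1 h)))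
  have hcov : u ⋖ c i.succ ⊔ u := covBy_sup_of_inf_covBy_left (hciu.symm ▸ hc i)
  have hle : b ⊔ u ≤ c i.succ ⊔ u :=
    sup_le (hi'.trans (sup_le (hau.trans le_sup_right) le_sup_left)) le_sup_right
  exact ⟨i, u, hbu, hciu,
    (hcov.eq_or_eq le_sup_right hle).resolve_left (hi ∘ sup_eq_right.1)⟩

end Lattices

namespace Matching

variable {μ μ' ν ν' : Matching M W} {m m' : M} {w w' : W} {ρ ρ' : List (W × M)}

theorem mu_eq_iff_nu_eq : μ.mu = ν.mu ↔ μ.nu = ν.nu := by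
  calc
    μ.mu = ν.mu ↔ ∀ m w, μ.mu m = some w ↔ ν.mu m = some w :=
      funext_iff.trans (forall_congr' fun _ => Option.ext_iff)
    _ ↔ ∀ w m, μ.nu w = some m ↔ ν.nu w = some m := by
      simp only [consistent]
      exact forall_comm
    _ ↔ μ.nu = ν.nu := (funext_iff.trans (forall_congr' fun _ => Option.ext_iff)).symm

theorem ext_nu (h : ∀ w, μ.nu w = ν.nu w) : μ = ν := by
  have hnu : μ.nu = ν.nu := funext h
  have hmu : μ.mu = ν.mu := mu_eq_iff_nu_eq.2 hnu
  cases μ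
  cases ν
  simp_all only

theorem ext_mu (h : ∀ m, μ.mu m = ν.mu m) : μ = ν :=
  ext_nu (congrFun (mu_eq_iff_nu_eq.1 (funext h)))

theorem eq_of_mu_eq_some (h : μ.mu m = some w) (h' : μ.mu m' = some w) : m = m' :=
  Option.some.inj (((μ.consistent m w).1 h).symm.trans ((μ.consistent m' w).1 h'))

theorem eq_of_nu_eq_some (h : μ.nu w = some m) (h' : μ.nu w' = some m) : w = w' :=
  Option.some.inj (((μ.consistent m w).2 h).symm.trans ((μ.consistent m w').2 h'))

open Classical in
/-- The matching that takes the pairs of `ν` on the men in `A` and the women in `B`, and those of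
`μ` elsewhere. -/
noncomputable def splice (μ ν : Matching M W) (A : Set M) (B : Set W)
    (h : ∀ m w, μ.mu m = some w ∨ ν.mu m = some w → (m ∈ A ↔ w ∈ B)) : Matching M W where
  mu m := if m ∈ A then ν.mu m else μ.mu m
  nu w := if w ∈ B then ν.nu w else μ.nu w
  consistent m w := by
    have hμ := μ.consistent m w
    have hν := ν.consistent m w
    have := h m w
    split_ifs <;> grind

/-- The matching in which each man takes over the `μ`-partner of the man `g m`. Eliminating a
rotation amounts to permuting its men cyclically. -/
def permute (μ : Matching M W) (g : Equiv.Perm M) : Matching M W where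
  mu m := μ.mu (g m)
  nu w := (μ.nu w).map g.symm
  consistent m w := by simp [μ.consistent, Equiv.symm_apply_eq]

@[simp]
theorem permute_mu (g : Equiv.Perm M) (m : M) : (μ.permute g).mu m = μ.mu (g m) := rfl

@[simp]
theorem permute_nu (g : Equiv.Perm M) (w : W) : (μ.permute g).nu w = (μ.nu w).map g.symm := rfl

theorem permute_right_injOn {g g' : Equiv.Perm M} (hg : ∀ m, μ.mu m = none → g m = m)
    (hg' : ∀ m, μ.mu m = none → g' m = m) (h : μ.permute g = μ.permute g') : g = g' := by
  ext m
  have hm : μ.mu (g m) = μ.mu (g' m) := congrFun (congrArg mu h) m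
  cases hw : μ.mu (g m) with
  | some w => exact eq_of_mu_eq_some hw (hm ▸ hw)
  | none =>
    rw [g.injective (hg _ hw), g'.injective (hg' _ (hm ▸ hw))]

theorem permute_formPerm_nu_of_notMem [DecidableEq M] (h : ∀ p ∈ ρ, μ.nu p.1 = some p.2)
    (hw : w ∉ ρ.map Prod.fst) : (μ.permute (ρ.map Prod.snd).formPerm).nu w = μ.nu w := by
  cases hm : μ.nu w with
  | none => simp [hm]
  | some m =>
    have hmem : m ∉ ρ.map Prod.snd := fun hmem => by
      obtain ⟨p, hp, rfl⟩ := List.mem_map.1 hmem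
      exact hw (List.mem_map.2 ⟨p, hp, eq_of_nu_eq_some (h p hp) hm⟩)
    simp [hm, Equiv.symm_apply_eq, List.formPerm_apply_of_notMem hmem]

theorem isElimOf_iff_eq_permute [DecidableEq M] :
    IsElimOf μ' μ ρ ↔ 2 ≤ ρ.length ∧ (ρ.map Prod.snd).Nodup ∧
      (∀ p ∈ ρ, μ.nu p.1 = some p.2) ∧ μ' = μ.permute (ρ.map Prod.snd).formPerm := by
  constructor
  · rintro ⟨hlen, -, hmen, hμ, hμ', hfix, -⟩
    have hpairs : ∀ p ∈ ρ, μ.nu p.1 = some p.2 := List.forall_mem_iff_get.2 hμ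
    refine ⟨hlen, hmen, hpairs, ext_mu fun m => ?_⟩
    by_cases hm : m ∈ ρ.map Prod.snd
    · obtain ⟨p, hp, rfl⟩ := List.mem_map.1 hm
      obtain ⟨i, hi, rfl⟩ := List.getElem_of_mem hp
      refine (hμ' ⟨i, hi⟩).trans ?_
      rw [permute_mu, formPerm_map_apply_getElem hmen, (μ.consistent _ _).2 (hpairs _ _)]
      · rfl
      · exact List.getElem_mem _
    · rw [hfix m hm, permute_mu, List.formPerm_apply_of_notMem hm]
  · rintro ⟨hlen, hmen, hpairs, rfl⟩
    have hwomen : (ρ.map Prod.fst).Nodup := by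
      refine hmen.of_map.map_on fun p hp q hq hpq => Prod.ext hpq ?_
      exact Option.some.inj ((hpairs p hp).symm.trans (hpq ▸ hpairs q hq))
    refine ⟨hlen, hwomen, hmen, fun i => hpairs _ (List.get_mem _ _), fun i => ?_, fun m hm => ?_,
      fun w hw => permute_formPerm_nu_of_notMem hpairs hw⟩
    · change μ.mu ((ρ.map Prod.snd).formPerm (ρ[i.1]).2) = _
      rw [formPerm_map_apply_getElem hmen]
      exact (μ.consistent _ _).2 (hpairs _ (List.get_mem _ _))
    · rw [permute_mu, List.formPerm_apply_of_notMem hm]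

namespace IsElimOf

theorem nu_eq_some (h : IsElimOf μ' μ ρ) {p : W × M} (hp : p ∈ ρ) : μ.nu p.1 = some p.2 := by
  classical exact (isElimOf_iff_eq_permute.1 h).2.2.1 p hp

theorem nu_ne (h : IsElimOf μ' μ ρ) {p : W × M} (hp : p ∈ ρ) : μ.nu p.1 ≠ μ'.nu p.1 := by
  classical
  obtain ⟨hlen, hmen, hpairs, rfl⟩ := isElimOf_iff_eq_permute.1 h
  have hmove : (ρ.map Prod.snd).formPerm p.2 ≠ p.2 :=
    (List.formPerm_apply_mem_ne_self_iff _ hmen _ (List.mem_map_of_mem hp)).2 (by simpa using hlen)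
  simpa [hpairs p hp, Equiv.eq_symm_apply] using hmove

theorem ne (h : IsElimOf μ' μ ρ) : μ' ≠ μ := by
  rintro rfl
  exact h.nu_ne (List.getElem_mem (Nat.zero_lt_of_lt h.1)) rfl

theorem congr (h : IsElimOf μ' μ ρ)
    (hν : ∀ w, (ν.nu w = μ.nu w ∧ ν'.nu w = μ'.nu w) ∨ (μ.nu w = μ'.nu w ∧ ν.nu w = ν'.nu w)) :
    IsElimOf ν' ν ρ := by
  classical
  obtain ⟨hlen, hmen, hpairs, hμ'⟩ := isElimOf_iff_eq_permute.1 h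
  have hchanged : ∀ p ∈ ρ, ν.nu p.1 = μ.nu p.1 ∧ ν'.nu p.1 = μ'.nu p.1 := fun p hp =>
    (hν p.1).resolve_right fun hsame => h.nu_ne hp hsame.1
  have hpairs' : ∀ p ∈ ρ, ν.nu p.1 = some p.2 := fun p hp => (hchanged p hp).1.trans (hpairs p hp)
  refine isElimOf_iff_eq_permute.2 ⟨hlen, hmen, hpairs', ext_nu fun w => ?_⟩
  by_cases hw : w ∈ ρ.map Prod.fst
  · obtain ⟨p, hp, rfl⟩ := List.mem_map.1 hw
    rw [(hchanged p hp).2, hμ', permute_nu, permute_nu, (hchanged p hp).1]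
  · have hμw : μ'.nu w = μ.nu w := hμ' ▸ permute_formPerm_nu_of_notMem hpairs hw
    rw [permute_formPerm_nu_of_notMem hpairs' hw]
    rcases hν w with ⟨hw₁, hw₂⟩ | ⟨-, hw₂⟩
    · rw [hw₁, hw₂, hμw]
    · exact hw₂.symm

theorem map_some_fst (h : IsElimOf μ' μ ρ) :
    ρ.map (Prod.map some id) = (ρ.map Prod.snd).map fun m => (μ.mu m, m) := by
  rw [List.map_map, List.map_inj_left]
  exact fun p hp => Prod.ext ((μ.consistent _ _).2 (h.nu_eq_some hp)).symm rfl

theorem formPerm_apply_of_mu_eq_none [DecidableEq M] (h : IsElimOf μ' μ ρ) (hm : μ.mu m = none) :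
    (ρ.map Prod.snd).formPerm m = m := by
  refine List.formPerm_apply_of_notMem fun hmem => ?_
  obtain ⟨p, hp, rfl⟩ := List.mem_map.1 hmem
  simp [(μ.consistent _ _).2 (h.nu_eq_some hp)] at hm

theorem isRotated (h : IsElimOf μ' μ ρ) (h' : IsElimOf μ' μ ρ') : ρ.IsRotated ρ' := by
  classical
  obtain ⟨hlen, hmen, -, hμ'⟩ := isElimOf_iff_eq_permute.1 h
  obtain ⟨-, hmen', -, hμ''⟩ := isElimOf_iff_eq_permute.1 h'
  have hperm : (ρ.map Prod.snd).formPerm = (ρ'.map Prod.snd).formPerm :=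
    permute_right_injOn (fun _ => h.formPerm_apply_of_mu_eq_none)
      (fun _ => h'.formPerm_apply_of_mu_eq_none) (hμ'.symm.trans hμ'')
  obtain ⟨n, hn⟩ : (ρ.map Prod.snd).IsRotated (ρ'.map Prod.snd) :=
    ((List.formPerm_eq_formPerm_iff hmen hmen').1 hperm).resolve_right fun hle => by
      simp only [List.length_map] at hle
      lia
  refine ⟨n, List.map_injective_iff.2 ((Option.some_injective W).prodMap injective_id) ?_⟩
  rw [List.map_rotate, h.map_some_fst, h'.map_some_fst, ← List.map_rotate, hn]

end IsElimOf

theorem exists_isElimOf_permute_formPerm [DecidableEq M] {l : List M} (hlen : 2 ≤ l.length)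
    (hl : l.Nodup) (hmu : ∀ m ∈ l, (μ.mu m).isSome) :
    ∃ ρ, IsElimOf (μ.permute l.formPerm) μ ρ := by
  refine ⟨l.pmap (fun m hm => ((μ.mu m).get hm, m)) hmu, isElimOf_iff_eq_permute.2 ?_⟩
  have hsnd : (l.pmap (fun m hm => ((μ.mu m).get hm, m)) hmu).map Prod.snd = l := by
    simp [List.map_pmap]
  refine ⟨by simpa using hlen, hsnd.symm ▸ hl, fun p hp => ?_, by rw [hsnd]⟩
  obtain ⟨m, hm, rfl⟩ := List.mem_pmap.1 hp
  exact (μ.consistent _ _).1 (Option.some_get _).symm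

end Matching

namespace Market

variable {mkt : Market M W} {μ ν σ : Matching M W} {m : M} {w : W}

theorem stable_iff : mkt.Stable μ ↔
    (∀ m, mkt.mRank m none ≤ mkt.mRank m (μ.mu m)) ∧
    (∀ w, mkt.wRank w none ≤ mkt.wRank w (μ.nu w)) ∧
    ∀ m w, mkt.mRank m (μ.mu m) < mkt.mRank m (some w) →
      mkt.wRank w (some m) < mkt.wRank w (μ.nu w) := by
  constructor
  · rintro ⟨⟨hm, hw⟩, hblock⟩
    refine ⟨fun m => ?_, fun w => ?_, fun m w hlt => ?_⟩
    · cases h : μ.mu m with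
      | none => rfl
      | some w => exact (hm m w h).le
    · cases h : μ.nu w with
      | none => rfl
      | some m => exact (hw w m h).le
    · have hne : μ.mu m ≠ some w := fun h => (h ▸ hlt).false
      refine lt_of_le_of_ne (not_lt.1 fun h => hblock m w ⟨hne, hlt, h⟩) fun h => ?_
      exact hne ((μ.consistent m w).2 (mkt.wRank_inj w h).symm)
  · rintro ⟨hm, hw, hblock⟩
    refine ⟨⟨fun m w h => ?_, fun w m h => ?_⟩, fun m w ⟨_, hlt, hlt'⟩ => ?_⟩
    · exact lt_of_le_of_ne (h ▸ hm m) ((mkt.mRank_inj m).ne (Option.some_ne_none w).symm)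
    · exact lt_of_le_of_ne (h ▸ hw w) ((mkt.wRank_inj w).ne (Option.some_ne_none m).symm)
    · exact (hblock m w hlt).not_gt hlt'

namespace Stable

theorem mRank_none_le (hμ : mkt.Stable μ) (m : M) :
    mkt.mRank m none ≤ mkt.mRank m (μ.mu m) :=
  (stable_iff.1 hμ).1 m

theorem wRank_none_le (hμ : mkt.Stable μ) (w : W) :
    mkt.wRank w none ≤ mkt.wRank w (μ.nu w) :=
  (stable_iff.1 hμ).2.1 w

theorem wRank_lt_of_mRank_lt (hμ : mkt.Stable μ)
    (h : mkt.mRank m (μ.mu m) < mkt.mRank m (some w)) :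
    mkt.wRank w (some m) < mkt.wRank w (μ.nu w) :=
  (stable_iff.1 hμ).2.2 m w h

theorem mRank_lt_of_wRank_lt (hμ : mkt.Stable μ)
    (h : mkt.wRank w (μ.nu w) < mkt.wRank w (some m)) :
    mkt.mRank m (some w) < mkt.mRank m (μ.mu m) := by
  refine lt_of_le_of_ne (not_lt.1 fun hlt => (hμ.wRank_lt_of_mRank_lt hlt).not_gt h) fun heq => ?_
  rw [(μ.consistent m w).1 (mkt.mRank_inj m heq).symm] at h
  exact h.false

theorem of_max_min (hμ : mkt.Stable μ) (hν : mkt.Stable ν)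
    (hm : ∀ m, mkt.mRank m (σ.mu m) = max (mkt.mRank m (μ.mu m)) (mkt.mRank m (ν.mu m)))
    (hw : ∀ w, mkt.wRank w (σ.nu w) = min (mkt.wRank w (μ.nu w)) (mkt.wRank w (ν.nu w))) :
    mkt.Stable σ := by
  simp only [stable_iff, hm, hw, le_max_iff, le_min_iff, max_lt_iff, lt_min_iff]
  exact ⟨fun m => .inl (hμ.mRank_none_le m),
    fun w => ⟨hμ.wRank_none_le w, hν.wRank_none_le w⟩,
    fun _ _ h => ⟨hμ.wRank_lt_of_mRank_lt h.1, hν.wRank_lt_of_mRank_lt h.2⟩⟩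

theorem of_min_max (hμ : mkt.Stable μ) (hν : mkt.Stable ν)
    (hm : ∀ m, mkt.mRank m (σ.mu m) = min (mkt.mRank m (μ.mu m)) (mkt.mRank m (ν.mu m)))
    (hw : ∀ w, mkt.wRank w (σ.nu w) = max (mkt.wRank w (μ.nu w)) (mkt.wRank w (ν.nu w))) :
    mkt.Stable σ := by
  simp only [stable_iff, hm, hw, le_max_iff, le_min_iff, min_lt_iff, lt_max_iff]
  exact ⟨fun m => ⟨hμ.mRank_none_le m, hν.mRank_none_le m⟩,
    fun w => .inl (hμ.wRank_none_le w),
    fun _ _ h => h.imp hμ.wRank_lt_of_mRank_lt hν.wRank_lt_of_mRank_lt⟩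

end Stable

/-- The men with at least two stable partners, being unmatched counting as a partner. -/
def unsettledMen (mkt : Market M W) : Set M :=
  {m | ∃ μ ν, mkt.Stable μ ∧ mkt.Stable ν ∧ μ.mu m ≠ ν.mu m}

/-- The men who strictly prefer `μ` to `ν`. -/
def menPreferring (mkt : Market M W) (μ ν : Matching M W) : Set M :=
  {m | mkt.mRank m (ν.mu m) < mkt.mRank m (μ.mu m)}

/-- The women who strictly prefer `μ` to `ν`. -/
def womenPreferring (mkt : Market M W) (μ ν : Matching M W) : Set W :=
  {w | mkt.wRank w (ν.nu w) < mkt.wRank w (μ.nu w)}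

theorem mem_menPreferring :
    m ∈ mkt.menPreferring μ ν ↔ mkt.mRank m (ν.mu m) < mkt.mRank m (μ.mu m) :=
  Iff.rfl

theorem mem_womenPreferring :
    w ∈ mkt.womenPreferring μ ν ↔ mkt.wRank w (ν.nu w) < mkt.wRank w (μ.nu w) :=
  Iff.rfl

section Splice

variable {A : Set M} {B : Set W}

theorem mRank_splice_eq_max (h) (m : M) :
    mkt.mRank m ((μ.splice ν (mkt.menPreferring ν μ) B h).mu m) =
      max (mkt.mRank m (μ.mu m)) (mkt.mRank m (ν.mu m)) := by
  simp only [Matching.splice, mem_menPreferring]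
  grind

theorem mRank_splice_eq_min (h) (m : M) :
    mkt.mRank m ((μ.splice ν (mkt.menPreferring μ ν) B h).mu m) =
      min (mkt.mRank m (μ.mu m)) (mkt.mRank m (ν.mu m)) := by
  simp only [Matching.splice, mem_menPreferring]
  grind

theorem wRank_splice_eq_max (h) (w : W) :
    mkt.wRank w ((μ.splice ν A (mkt.womenPreferring ν μ) h).nu w) =
      max (mkt.wRank w (μ.nu w)) (mkt.wRank w (ν.nu w)) := by
  simp only [Matching.splice, mem_womenPreferring]
  grind

theorem wRank_splice_eq_min (h) (w : W) :
    mkt.wRank w ((μ.splice ν A (mkt.womenPreferring μ ν) h).nu w) =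
      min (mkt.wRank w (μ.nu w)) (mkt.wRank w (ν.nu w)) := by
  simp only [Matching.splice, mem_womenPreferring]
  grind

end Splice

section Decomposition

theorem Stable.mapsTo_menPreferring (hμ : mkt.Stable μ) :
    Set.MapsTo ν.mu (mkt.menPreferring ν μ) (some '' mkt.womenPreferring μ ν) := by
  intro m hm
  rw [mem_menPreferring] at hm
  cases h : ν.mu m with
  | none => exact absurd (h ▸ hm) (hμ.mRank_none_le m).not_gt
  | some w =>
    refine ⟨w, ?_, rfl⟩
    rw [mem_womenPreferring, (ν.consistent m w).1 h]
    exact hμ.wRank_lt_of_mRank_lt (h ▸ hm)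

theorem Stable.womenPreferring_subset (hν : mkt.Stable ν) :
    some '' mkt.womenPreferring μ ν ⊆ μ.mu '' mkt.menPreferring ν μ := by
  rintro _ ⟨w, hw, rfl⟩
  rw [mem_womenPreferring] at hw
  cases h : μ.nu w with
  | none => exact absurd (h ▸ hw) (hν.wRank_none_le w).not_gt
  | some m =>
    have hm : μ.mu m = some w := (μ.consistent m w).2 h
    refine ⟨m, ?_, hm⟩
    rw [mem_menPreferring, hm]
    exact hν.mRank_lt_of_wRank_lt (h ▸ hw)

theorem menPreferring_nonempty (hμ : mkt.Stable μ) (h : mkt.StrictDom ν μ) :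
    (mkt.menPreferring μ ν).Nonempty := by
  obtain ⟨w, hw⟩ : ∃ w, μ.nu w ≠ ν.nu w := by
    by_contra! hall
    exact h.2 (Matching.ext_nu hall).symm
  have hmem : w ∈ mkt.womenPreferring ν μ := (h.1 w).lt_of_ne ((mkt.wRank_inj w).ne hw)
  exact .of_image (⟨some w, hμ.womenPreferring_subset ⟨w, hmem, rfl⟩⟩ : Set.Nonempty _)

variable [Finite mkt.unsettledMen]

theorem finite_menPreferring (hμ : mkt.Stable μ) (hν : mkt.Stable ν) :
    (mkt.menPreferring μ ν).Finite :=
  (Set.toFinite mkt.unsettledMen).subset fun _ hm =>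
    ⟨μ, ν, hμ, hν, fun h => (mem_menPreferring.1 hm).ne (congrArg _ h.symm)⟩

/-- The men better off under `ν` are injected by `ν` into the women worse off under `ν`, whose
`μ`-partners are all better off under `ν`; counting turns the inclusions into equalities. -/
theorem image_menPreferring (hμ : mkt.Stable μ) (hν : mkt.Stable ν) :
    ν.mu '' mkt.menPreferring ν μ = some '' mkt.womenPreferring μ ν ∧
      μ.mu '' mkt.menPreferring ν μ = some '' mkt.womenPreferring μ ν := by
  have hfin : (mkt.menPreferring ν μ).Finite := finite_menPreferring hν hμ
  have hsub : ν.mu '' mkt.menPreferring ν μ ⊆ some '' mkt.womenPreferring μ ν :=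
    hμ.mapsTo_menPreferring.image_subset
  have hsub' : some '' mkt.womenPreferring μ ν ⊆ μ.mu '' mkt.menPreferring ν μ :=
    hν.womenPreferring_subset
  have hinj : Set.InjOn ν.mu (mkt.menPreferring ν μ) := fun m hm m' _ h => by
    obtain ⟨w, -, hw⟩ := hμ.mapsTo_menPreferring hm
    exact Matching.eq_of_mu_eq_some hw.symm (h ▸ hw.symm)
  have hcard : (μ.mu '' mkt.menPreferring ν μ).ncard ≤ (ν.mu '' mkt.menPreferring ν μ).ncard :=
    (Set.ncard_image_le hfin).trans hinj.ncard_image.ge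
  have heq := Set.eq_of_subset_of_ncard_le (hsub.trans hsub') hcard (hfin.image _)
  exact ⟨hsub.antisymm (heq ▸ hsub'), (heq ▸ hsub).antisymm hsub'⟩

theorem mem_menPreferring_iff (hμ : mkt.Stable μ) (hν : mkt.Stable ν)
    (h : μ.mu m = some w ∨ ν.mu m = some w) :
    m ∈ mkt.menPreferring ν μ ↔ w ∈ mkt.womenPreferring μ ν := by
  obtain ⟨himage, himage'⟩ := image_menPreferring hμ hν
  rw [← (Option.some_injective W).mem_set_image]
  rcases h with h | h
  · rw [← himage', ← h]
    refine ⟨Set.mem_image_of_mem _, ?_⟩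
    rintro ⟨m', hm', heq⟩
    exact Matching.eq_of_mu_eq_some (heq.trans h) h ▸ hm'
  · rw [← himage, ← h]
    refine ⟨Set.mem_image_of_mem _, ?_⟩
    rintro ⟨m', hm', heq⟩
    exact Matching.eq_of_mu_eq_some (heq.trans h) h ▸ hm'

end Decomposition

/-- The stable matchings of a market, ordered by woman-dominance. -/
structure StableMatching (mkt : Market M W) extends Matching M W where
  stable : mkt.Stable toMatching

namespace StableMatching

theorem toMatching_injective : Injective (toMatching : mkt.StableMatching → Matching M W) := by
  rintro ⟨_, _⟩ ⟨_, _⟩ rfl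
  rfl

instance : CanLift (Matching M W) mkt.StableMatching toMatching mkt.Stable where
  prf μ hμ := ⟨⟨μ, hμ⟩, rfl⟩

theorem wRank_nu_injective :
    Injective fun (μ : mkt.StableMatching) w => mkt.wRank w (μ.nu w) := fun _ _ h =>
  toMatching_injective (Matching.ext_nu fun w => mkt.wRank_inj w (congrFun h w))

instance : PartialOrder mkt.StableMatching :=
  PartialOrder.lift _ wRank_nu_injective

theorem lt_iff_strictDom {μ ν : mkt.StableMatching} :
    μ < ν ↔ mkt.StrictDom ν.toMatching μ.toMatching :=
  lt_iff_le_and_ne.trans (and_congr_right' (ne_comm.trans toMatching_injective.ne_iff.symm))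

theorem covBy_iff_covers {μ ν : mkt.StableMatching} :
    μ ⋖ ν ↔ mkt.Covers ν.toMatching μ.toMatching := by
  refine and_congr lt_iff_strictDom ⟨?_, fun h τ hμτ hτν => ?_⟩
  · rintro h ⟨τ, hτ, hτν, hμτ⟩
    exact h (c := ⟨τ, hτ⟩) (lt_iff_strictDom.2 hμτ) (lt_iff_strictDom.2 hτν)
  · exact h ⟨τ.toMatching, τ.stable, lt_iff_strictDom.1 hτν, lt_iff_strictDom.1 hμτ⟩

section Lattice

variable [Finite mkt.unsettledMen]

noncomputable instance : Max mkt.StableMatching where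
  max μ ν :=
    { toMatching := .splice μ.toMatching ν.toMatching
        (mkt.menPreferring μ.toMatching ν.toMatching)
        (mkt.womenPreferring ν.toMatching μ.toMatching)
        fun _ _ h => mem_menPreferring_iff ν.stable μ.stable h.symm
      stable := .of_min_max μ.stable ν.stable (mRank_splice_eq_min _) (wRank_splice_eq_max _) }

noncomputable instance : Min mkt.StableMatching where
  min μ ν :=
    { toMatching := .splice μ.toMatching ν.toMatching
        (mkt.menPreferring ν.toMatching μ.toMatching)
        (mkt.womenPreferring μ.toMatching ν.toMatching)
        fun _ _ h => mem_menPreferring_iff μ.stable ν.stable h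
      stable := .of_max_min μ.stable ν.stable (mRank_splice_eq_max _) (wRank_splice_eq_min _) }

theorem wRank_sup (μ ν : mkt.StableMatching) (w : W) :
    mkt.wRank w ((μ ⊔ ν).nu w) = max (mkt.wRank w (μ.nu w)) (mkt.wRank w (ν.nu w)) :=
  wRank_splice_eq_max (fun _ _ h => mem_menPreferring_iff ν.stable μ.stable h.symm) w

theorem wRank_inf (μ ν : mkt.StableMatching) (w : W) :
    mkt.wRank w ((μ ⊓ ν).nu w) = min (mkt.wRank w (μ.nu w)) (mkt.wRank w (ν.nu w)) :=
  wRank_splice_eq_min (fun _ _ h => mem_menPreferring_iff μ.stable ν.stable h) w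

noncomputable instance : DistribLattice mkt.StableMatching :=
  wRank_nu_injective.distribLattice _ Iff.rfl Iff.rfl
    (fun μ ν => funext (wRank_sup μ ν)) (fun μ ν => funext (wRank_inf μ ν))

theorem nu_sup_and_nu_inf (μ ν : mkt.StableMatching) (w : W) :
    ((μ ⊔ ν).nu w = μ.nu w ∧ (μ ⊓ ν).nu w = ν.nu w) ∨
      ((μ ⊔ ν).nu w = ν.nu w ∧ (μ ⊓ ν).nu w = μ.nu w) := by
  simp only [← (mkt.wRank_inj w).eq_iff, wRank_sup, wRank_inf]
  lia

theorem isElimOf_sup_iff {μ ν : mkt.StableMatching} {ρ : List (W × M)} :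
    (μ ⊔ ν).IsElimOf ν.toMatching ρ ↔ μ.IsElimOf (μ ⊓ ν).toMatching ρ := by
  constructor <;> refine fun h => h.congr fun w => ?_ <;>
    rcases nu_sup_and_nu_inf μ ν w with ⟨hsup, hinf⟩ | ⟨hsup, hinf⟩ <;> simp [hsup, hinf]

end Lattice

end StableMatching

section NextChoice

variable {g : Equiv.Perm M}

/-- The women acceptable to `m` who would leave their `μ`-partner for him. -/
def willingWomen (mkt : Market M W) (μ : Matching M W) (m : M) : Set W :=
  {w | mkt.mRank m none < mkt.mRank m (some w) ∧ mkt.wRank w (μ.nu w) < mkt.wRank w (some m)}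

/-- `w` is the woman that `m` likes best among those willing to leave their `μ`-partner for him. -/
def IsNextChoice (mkt : Market M W) (μ : Matching M W) (m : M) (w : W) : Prop :=
  w ∈ mkt.willingWomen μ m ∧
    ∀ w' ∈ mkt.willingWomen μ m, mkt.mRank m (some w') ≤ mkt.mRank m (some w)

theorem mem_willingWomen : w ∈ mkt.willingWomen μ m ↔
    mkt.mRank m none < mkt.mRank m (some w) ∧ mkt.wRank w (μ.nu w) < mkt.wRank w (some m) :=
  Iff.rfl

theorem exists_isNextChoice (hμ : mkt.Stable μ) (hne : (mkt.willingWomen μ m).Nonempty) :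
    ∃ w, mkt.IsNextChoice μ m w := by
  have hbdd : BddAbove ((fun w => mkt.mRank m (some w)) '' mkt.willingWomen μ m) := by
    refine ⟨mkt.mRank m (μ.mu m), ?_⟩
    rintro _ ⟨w, hw, rfl⟩
    exact (hμ.mRank_lt_of_wRank_lt (mem_willingWomen.1 hw).2).le
  obtain ⟨w, hw, hmax⟩ := Nat.sSup_mem (hne.image _) hbdd
  exact ⟨w, hw, fun w' hw' => (le_csSup hbdd (Set.mem_image_of_mem _ hw')).trans hmax.ge⟩

theorem IsNextChoice.mu_ne (h : mkt.IsNextChoice μ m w) : μ.mu m ≠ some w := fun hm =>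
  (mem_willingWomen.1 h.1).2.ne (congrArg _ ((μ.consistent m w).1 hm))

theorem permute_nu_eq_or_isNextChoice
    (hg : ∀ m, g m ≠ m → ∃ w, μ.mu (g m) = some w ∧ mkt.IsNextChoice μ m w) (w : W) :
    (μ.permute g).nu w = μ.nu w ∨
      ∃ m, g m ≠ m ∧ (μ.permute g).nu w = some m ∧ mkt.IsNextChoice μ m w := by
  refine or_iff_not_imp_left.2 fun hne => ?_
  obtain ⟨m, hm⟩ : ∃ m, (μ.permute g).nu w = some m :=
    Option.ne_none_iff_exists'.1 fun h => hne (h.trans (Option.map_eq_none_iff.1 h).symm)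
  have hmu : μ.mu (g m) = some w := ((μ.permute g).consistent m w).2 hm
  have hgm : g m ≠ m := fun h => hne (hm.trans ((μ.consistent m w).1 (h ▸ hmu)).symm)
  obtain ⟨w', hw', hnext⟩ := hg m hgm
  obtain rfl : w' = w := Option.some.inj (hw'.symm.trans hmu)
  exact ⟨m, hgm, hm, hnext⟩

theorem dom_permute (hg : ∀ m, g m ≠ m → ∃ w, μ.mu (g m) = some w ∧ mkt.IsNextChoice μ m w) :
    mkt.Dom (μ.permute g) μ := by
  intro w
  rcases permute_nu_eq_or_isNextChoice hg w with h | ⟨m, -, h, hnext⟩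
  · rw [h]
  · rw [h]
    exact (mem_willingWomen.1 hnext.1).2.le

theorem Stable.permute (hμ : mkt.Stable μ)
    (hg : ∀ m, g m ≠ m → ∃ w, μ.mu (g m) = some w ∧ mkt.IsNextChoice μ m w) :
    mkt.Stable (μ.permute g) := by
  refine stable_iff.2 ⟨fun m => ?_, fun w => (hμ.wRank_none_le w).trans (dom_permute hg w),
    fun m w hlt => ?_⟩
  · by_cases hgm : g m = m
    · simpa [hgm] using hμ.mRank_none_le m
    · obtain ⟨w, hw, hnext⟩ := hg m hgm
      simpa [hw] using (mem_willingWomen.1 hnext.1).1.le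
  · by_contra! hle
    have hne : (μ.permute g).mu m ≠ some w := fun h => (h ▸ hlt).false
    have hwilling : mkt.wRank w (μ.nu w) < mkt.wRank w (some m) := by
      refine ((dom_permute hg w).trans hle).lt_of_ne fun heq => hne ?_
      exact ((μ.permute g).consistent m w).2
        (mkt.wRank_inj w (hle.antisymm (heq ▸ dom_permute hg w)))
    by_cases hgm : g m = m
    · rw [Matching.permute_mu, hgm] at hlt
      exact (hμ.wRank_lt_of_mRank_lt hlt).not_gt hwilling
    · obtain ⟨w', hw', hmem, hmax⟩ := hg m hgm
      rw [Matching.permute_mu, hw'] at hlt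
      exact (hmax w ⟨(mem_willingWomen.1 hmem).1.trans hlt, hwilling⟩).not_gt hlt

variable [Finite mkt.unsettledMen]

/-- The `ν`-partner of `m` is willing in `μ`, so his next choice is at least as good for him, and
stability of `ν` then bounds what it gives to the woman. -/
theorem exists_isNextChoice_of_mem_menPreferring (hμ : mkt.Stable μ) (hν : mkt.Stable ν)
    (hm : m ∈ mkt.menPreferring μ ν) :
    ∃ m' ∈ mkt.menPreferring μ ν, ∃ w, μ.mu m' = some w ∧ mkt.IsNextChoice μ m w ∧
      mkt.wRank w (some m) ≤ mkt.wRank w (ν.nu w) := by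
  obtain ⟨himage, himage'⟩ := image_menPreferring hν hμ
  obtain ⟨w', hw', hm'⟩ := himage' ▸ Set.mem_image_of_mem ν.mu hm
  have hnu : ν.nu w' = some m := (ν.consistent m w').1 hm'.symm
  rw [mem_womenPreferring, hnu] at hw'
  have hwilling : w' ∈ mkt.willingWomen μ m := ⟨hν.1.1 m w' hm'.symm, hw'⟩
  obtain ⟨w, hw⟩ := exists_isNextChoice hμ ⟨w', hwilling⟩
  have hle : mkt.wRank w (some m) ≤ mkt.wRank w (ν.nu w) := by
    rcases (hw.2 w' hwilling).eq_or_lt with heq | hlt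
    · obtain rfl : w' = w := Option.some.inj (mkt.mRank_inj m heq)
      rw [hnu]
    · exact (hν.wRank_lt_of_mRank_lt (hm' ▸ hlt)).le
  have hwomen : w ∈ mkt.womenPreferring ν μ := (mem_willingWomen.1 hw.1).2.trans_le hle
  obtain ⟨m', hmem, hmu⟩ := himage.symm ▸ Set.mem_image_of_mem some hwomen
  exact ⟨m', hmem, w, hmu, hw, hle⟩

theorem exists_stable_isElimOf (hμ : mkt.Stable μ) (hν : mkt.Stable ν)
    (h : mkt.StrictDom ν μ) :
    ∃ (τ : Matching M W) (ρ : List (W × M)),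
      mkt.Stable τ ∧ mkt.Dom τ μ ∧ mkt.Dom ν τ ∧ τ.IsElimOf μ ρ := by
  classical
  choose! f hfmem hf using fun m (hm : m ∈ mkt.menPreferring μ ν) =>
    exists_isNextChoice_of_mem_menPreferring hμ hν hm
  obtain ⟨l, hne, hnodup, hl, hperm⟩ := exists_formPerm_eq_of_mapsTo
    (finite_menPreferring hμ hν) (menPreferring_nonempty hμ h) hfmem
  have hmem : ∀ m, l.formPerm m ≠ m → m ∈ l := fun m =>
    not_imp_comm.1 List.formPerm_apply_of_notMem
  have hg : ∀ m, l.formPerm m ≠ m →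
      ∃ w, μ.mu (l.formPerm m) = some w ∧ mkt.IsNextChoice μ m w := fun m hm => by
    obtain ⟨w, hw, hnext, -⟩ := hf m (hl m (hmem m hm))
    exact ⟨w, hperm m (hmem m hm) ▸ hw, hnext⟩
  have hlen : 2 ≤ l.length := by
    obtain ⟨m, hm⟩ := List.exists_mem_of_ne_nil l hne
    obtain ⟨w, hw, hnext, -⟩ := hf m (hl m hm)
    refine (List.formPerm_apply_mem_ne_self_iff l hnodup m hm).1 fun heq => hnext.mu_ne ?_
    rwa [← hperm m hm, heq] at hw
  obtain ⟨ρ, hρ⟩ : ∃ ρ, (μ.permute l.formPerm).IsElimOf μ ρ :=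
    Matching.exists_isElimOf_permute_formPerm hlen hnodup fun m hm => by
      obtain ⟨w, -, hw⟩ := (image_menPreferring hν hμ).1 ▸ Set.mem_image_of_mem μ.mu (hl m hm)
      rw [← hw, Option.isSome_some]
  refine ⟨_, ρ, hμ.permute hg, dom_permute hg, fun w => ?_, hρ⟩
  rcases permute_nu_eq_or_isNextChoice hg w with hw | ⟨m, hm, hw, -⟩
  · exact hw ▸ h.1 w
  · obtain ⟨w', hw', -, hle⟩ := hf m (hl m (hmem m hm))
    rw [← hperm m (hmem m hm)] at hw'
    obtain rfl : w' = w := Option.some.inj (hw'.symm.trans (((μ.permute _).consistent m w).2 hw))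
    rwa [hw]

theorem exists_isElimOf_of_covers (hμ : mkt.Stable μ) (hν : mkt.Stable ν)
    (h : mkt.Covers ν μ) : ∃ ρ, ν.IsElimOf μ ρ := by
  obtain ⟨τ, ρ, hτ, hμτ, hτν, hρ⟩ := exists_stable_isElimOf hμ hν h.1
  obtain rfl : ν = τ := by
    by_contra hne
    exact h.2 ⟨τ, hτ, ⟨hτν, hne⟩, hμτ, hρ.ne⟩
  exact ⟨ρ, hρ⟩

end NextChoice

theorem StableMatching.eq_of_isElimOf_of_isElimOf {k : ℕ} {c : Fin (k + 1) → mkt.StableMatching}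
    (hc : Monotone c) {ρ ρ' : List (W × M)} {i j : Fin k} {p : W × M}
    (hi : (c i.succ).IsElimOf (c i.castSucc).toMatching ρ)
    (hj : (c j.succ).IsElimOf (c j.castSucc).toMatching ρ') (hp : p ∈ ρ) (hp' : p ∈ ρ') :
    i = j := by
  wlog hij : i < j generalizing i j ρ ρ'
  · exact (not_lt.1 hij).antisymm' (not_lt.1 fun hji => hji.ne (this hj hi hp' hp hji))
  have hle : mkt.wRank p.1 ((c i.castSucc).nu p.1) ≤ mkt.wRank p.1 ((c i.succ).nu p.1) :=
    hc i.castSucc_le_succ p.1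
  have hle' : mkt.wRank p.1 ((c i.succ).nu p.1) ≤ mkt.wRank p.1 ((c j.castSucc).nu p.1) :=
    hc (Fin.succ_le_castSucc_iff.2 hij) p.1
  have hsame : (c j.castSucc).nu p.1 = (c i.castSucc).nu p.1 :=
    (hj.nu_eq_some hp').trans (hi.nu_eq_some hp).symm
  exact absurd (mkt.wRank_inj p.1 (hle.antisymm (hsame ▸ hle'))) (hi.nu_ne hp)

end Market

theorem maximal_chain_gives_all_rotations_general {M W : Type*} (mkt : Market M W)
    [Finite mkt.unsettledMen] (k : ℕ) (μ : Fin (k + 1) → Matching M W)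
    (hst : ∀ i, mkt.Stable (μ i))
    (hman : ∀ ν : Matching M W, mkt.Stable ν → mkt.Dom ν (μ 0))
    (hwom : ∀ ν : Matching M W, mkt.Stable ν → mkt.Dom (μ (Fin.last k)) ν)
    (hcov : ∀ i : Fin k, mkt.Covers (μ i.succ) (μ i.castSucc)) :
    ∃ ρ : Fin k → List (W × M),
      (∀ i : Fin k, Matching.IsElimOf (μ i.succ) (μ i.castSucc) (ρ i)) ∧
      (∀ i : Fin k, mkt.InPi (ρ i)) ∧
      (∀ ρ' : Fin k → List (W × M),
        (∀ i : Fin k, Matching.IsElimOf (μ i.succ) (μ i.castSucc) (ρ' i)) →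
        ∀ i : Fin k, (ρ' i).IsRotated (ρ i)) ∧
      (∀ σ : List (W × M), mkt.InPi σ → ∃! i : Fin k, (ρ i).IsRotated σ) := by
  choose ρ hρ using fun i => Market.exists_isElimOf_of_covers (hst _) (hst _) (hcov i)
  let c : Fin (k + 1) → mkt.StableMatching := fun i => ⟨μ i, hst i⟩
  have hc : ∀ i : Fin k, c i.castSucc ⋖ c i.succ := fun i =>
    Market.StableMatching.covBy_iff_covers.2 (hcov i)
  have hmono : Monotone c := Fin.monotone_iff_le_succ.2 fun i => (hc i).le
  refine ⟨ρ, hρ, fun i => ⟨_, hst _, _, hρ i, hst _, hcov i⟩,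
    fun ρ' hρ' i => (hρ' i).isRotated (hρ i), ?_⟩
  rintro σ ⟨ν, hν, ν', hσ, hν', hνν'⟩
  lift ν to mkt.StableMatching using hν
  lift ν' to mkt.StableMatching using hν'
  obtain ⟨i, u, hinf, hinf', hsup⟩ := exists_perspective_of_covBy hc
    (Market.StableMatching.covBy_iff_covers.2 hνν') (hman _ ν.stable) (hwom _ ν'.stable)
  have hσi : (μ i.succ).IsElimOf (μ i.castSucc) σ := by
    rw [← hinf, ← Market.StableMatching.isElimOf_sup_iff, hsup,
      Market.StableMatching.isElimOf_sup_iff, hinf'] at hσ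
    exact hσ
  refine ⟨i, (hρ i).isRotated hσi, fun j hj => ?_⟩
  obtain ⟨p, hp⟩ := List.exists_mem_of_length_pos (Nat.zero_lt_of_lt hσi.1)
  exact Market.StableMatching.eq_of_isElimOf_of_isElimOf hmono (hρ j) hσi (hj.mem_iff.2 hp) hp

/-- for any maximal chain `μ_0 < μ_1 < … < μ_k` of stable
matchings from the man-optimal to the woman-optimal stable matching, there is
a sequence of rotations `ρ_0, …, ρ_{k-1} ∈ Π`, unique up to cyclic shifts,
with `μ_{i+1}` the elimination of `ρ_i` from `μ_i`, and every rotation of `Π`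
appears exactly once in the sequence (up to cyclic shift). -/
theorem maximal_chain_gives_all_rotations {M W : Type*} [Fintype M] [Fintype W]
    (mkt : Market M W) (k : ℕ) (μ : Fin (k + 1) → Matching M W)
    (hst : ∀ i, mkt.Stable (μ i))
    (hman : ∀ ν : Matching M W, mkt.Stable ν → mkt.Dom ν (μ 0))
    (hwom : ∀ ν : Matching M W, mkt.Stable ν → mkt.Dom (μ (Fin.last k)) ν)
    (hcov : ∀ i : Fin k, mkt.Covers (μ i.succ) (μ i.castSucc)) :
    ∃ ρ : Fin k → List (W × M),
      (∀ i : Fin k, Matching.IsElimOf (μ i.succ) (μ i.castSucc) (ρ i)) ∧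
      (∀ i : Fin k, mkt.InPi (ρ i)) ∧
      (∀ ρ' : Fin k → List (W × M),
        (∀ i : Fin k, Matching.IsElimOf (μ i.succ) (μ i.castSucc) (ρ' i)) →
        ∀ i : Fin k, (ρ' i).IsRotated (ρ i)) ∧
      (∀ σ : List (W × M), mkt.InPi σ → ∃! i : Fin k, (ρ i).IsRotated σ) :=
  maximal_chain_gives_all_rotations_general mkt k μ hst hman hwom hcov
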